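/- arXiv:1011.2473 — 4 statements merged into one kernel-verified Lean document; each statement's English description precedes it below -/
import Mathlib

section
/- Let n ≥ 1 and for each j = 1,…,n let R_j : (0,∞) → ℝ be differentiable with R_j(t) > 0 for all t > 0. Define p : (0,∞) × ℝⁿ → ℝ by p(t,x) = ∏_{j=1}^n (2π R_j(t))^{-1/2} · exp( − ∑_{j=1}^n x_j² / (2 R_j(t)) ). Then for every t > 0 and every x ∈ ℝⁿ, ∂_t p(t,x) = (1/2) ∑_{j=1}^n R_j′(t) · ∂²_{x_j} p(t,x). -/
lemma aux_iter (K r : ℝ) (hr : 0 < r) (y : ℝ) :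
    iteratedDeriv 2 (fun y : ℝ => Real.exp (K - y ^ 2 / (2 * r))) y =
      Real.exp (K - y ^ 2 / (2 * r)) * (y ^ 2 / r ^ 2 - 1 / r) := by
  have h1 : ∀ y : ℝ, HasDerivAt (fun y : ℝ => Real.exp (K - y ^ 2 / (2 * r)))
      (Real.exp (K - y ^ 2 / (2 * r)) * (-(y / r))) y := by
    intro y
    have h := ((((hasDerivAt_id y).pow 2).div_const (2 * r)).const_sub K).exp
    refine h.congr_deriv ?_
    simp only [id, Pi.pow_apply]
    congr 1
    push_cast
    field_simp
    try ring
  have h2 : deriv (fun y : ℝ => Real.exp (K - y ^ 2 / (2 * r))) =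
      fun y => Real.exp (K - y ^ 2 / (2 * r)) * (-(y / r)) := funext fun y => (h1 y).deriv
  rw [iteratedDeriv_succ, iteratedDeriv_one, h2]
  have h3 := (h1 y).mul (((hasDerivAt_id y).div_const r).neg)
  refine h3.deriv.trans ?_
  simp only [id, Pi.neg_apply]
  field_simp
  ring

lemma aux_exp {n : ℕ} (R : Fin n → ℝ) (hR : ∀ j, 0 < R j) (x : Fin n → ℝ) :
    (∏ j, (2 * Real.pi * R j) ^ (-(1 / 2) : ℝ)) * Real.exp (-∑ j, (x j) ^ 2 / (2 * R j)) =
      Real.exp (∑ j, (-(1 / 2) * Real.log (2 * Real.pi * R j) - (x j) ^ 2 / (2 * R j))) := by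
  rw [Finset.sum_sub_distrib, sub_eq_add_neg, Real.exp_add, Real.exp_sum]
  congr 1
  refine Finset.prod_congr rfl fun j _ => ?_
  have := hR j
  rw [Real.rpow_def_of_pos (by positivity), mul_comm]


/- STATEMENT 0 (Proposition 2.1): FPK equation for an n-dimensional zero-mean Gaussian
process with independent components having variance functions R_j. -/
theorem fpk_gaussian (n : ℕ) (hn : 1 ≤ n) (R : Fin n → ℝ → ℝ)
    (hdiff : ∀ j, ∀ t : ℝ, 0 < t → DifferentiableAt ℝ (R j) t)
    (hpos : ∀ j, ∀ t : ℝ, 0 < t → 0 < R j t)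
    (p : ℝ → (Fin n → ℝ) → ℝ)
    (hp : ∀ t : ℝ, 0 < t → ∀ x : Fin n → ℝ,
      p t x = (∏ j, (2 * Real.pi * R j t) ^ (-(1 / 2) : ℝ)) *
        Real.exp (-∑ j, (x j) ^ 2 / (2 * R j t)))
    (t : ℝ) (ht : 0 < t) (x : Fin n → ℝ) :
    deriv (fun s => p s x) t =
      (1 / 2) * ∑ j, deriv (R j) t *
        iteratedDeriv 2 (fun y => p t (Function.update x j y)) (x j) := by
  have hp' : ∀ s : ℝ, 0 < s → ∀ x : Fin n → ℝ, p s x = Real.exp (∑ j,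
      (-(1 / 2) * Real.log (2 * Real.pi * R j s) - (x j) ^ 2 / (2 * R j s))) := by
    intro s hs x
    rw [hp s hs x, aux_exp (fun j => R j s) (fun j => hpos j s hs) x]
  have hx : ∀ j, iteratedDeriv 2 (fun y => p t (Function.update x j y)) (x j) =
      p t x * ((x j) ^ 2 / (R j t) ^ 2 - 1 / R j t) := by
    intro j
    have key : ∀ y, p t (Function.update x j y) = Real.exp
        (((∑ i ∈ Finset.univ.erase j,
          (-(1 / 2) * Real.log (2 * Real.pi * R i t) - (x i) ^ 2 / (2 * R i t)))
          + -(1 / 2) * Real.log (2 * Real.pi * R j t)) - y ^ 2 / (2 * R j t)) := by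
      intro y
      rw [hp' t ht, ← Finset.sum_erase_add _ _ (Finset.mem_univ j), Function.update_self,
        add_sub_assoc]
      congr 2
      refine Finset.sum_congr rfl fun i hi => ?_
      rw [Function.update_of_ne (Finset.ne_of_mem_erase hi)]
    rw [funext key, aux_iter _ _ (hpos j t ht), ← key, Function.update_eq_self]
  have ht' : HasDerivAt (fun s => Real.exp (∑ j,
      (-(1 / 2) * Real.log (2 * Real.pi * R j s) - (x j) ^ 2 / (2 * R j s))))
      (Real.exp (∑ j,
      (-(1 / 2) * Real.log (2 * Real.pi * R j t) - (x j) ^ 2 / (2 * R j t))) *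
        ∑ j, (1 / 2) * (deriv (R j) t * ((x j) ^ 2 / (R j t) ^ 2 - 1 / R j t))) t := by
    refine HasDerivAt.exp (HasDerivAt.fun_sum fun j _ => ?_)
    have h0 := (hdiff j t ht).hasDerivAt
    have hr := hpos j t ht
    have ha := ((h0.const_mul (2 * Real.pi)).log (by positivity)).const_mul (-(1 / 2))
    have hb := (hasDerivAt_const t ((x j) ^ 2)).div (h0.const_mul 2) (by positivity)
    refine (ha.sub hb).congr_deriv ?_
    have := Real.pi_pos
    field_simp
    ring
  have hev : (fun s => p s x) =ᶠ[nhds t] fun s => Real.exp (∑ j,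
      (-(1 / 2) * Real.log (2 * Real.pi * R j s) - (x j) ^ 2 / (2 * R j s))) := by
    filter_upwards [lt_mem_nhds ht] with s hs using hp' s hs x
  rw [hev.deriv_eq, ht'.deriv, ← hp' t ht x, Finset.mul_sum, Finset.mul_sum]
  refine Finset.sum_congr rfl fun j _ => ?_
  rw [hx j]
  ring
end

section
/- Let β ∈ (0,1) and let g : (0,∞) × (0,∞) → [0,∞) be measurable with ∫₀^∞ e^{−st} g(t,τ) dt = e^{−τ s^β} for all s > 0 and all τ > 0. Define G(t,τ) = ∫₀^t g(u,τ) du. Fix s > 0 and τ₀ > 0, and suppose there exist δ > 0 with δ < τ₀ and a measurable function F : (0,∞) → [0,∞) with ∫₀^∞ e^{−st} F(t) dt < ∞ such that for almost every t > 0 the map τ ↦ G(t,τ) is differentiable on (τ₀ − δ, τ₀ + δ) with |∂_τ G(t,τ)| ≤ F(t) there. Then, writing h(t,τ) = −∂_τ G(t,τ), one has ∫₀^∞ e^{−st} h(t,τ₀) dt = s^{β−1} e^{−τ₀ s^β}. -/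
open MeasureTheory

lemma aux_laplace_prim (k : ℝ → ℝ) (hk : Measurable k) (s : ℝ) (hs : 0 < s)
    (hint : IntegrableOn (fun t => Real.exp (-s * t) * k t) (Set.Ioi 0)) :
    IntegrableOn (fun t => Real.exp (-s * t) * ∫ u in (0 : ℝ)..t, k u) (Set.Ioi 0) ∧
    ∫ t in Set.Ioi (0 : ℝ), (Real.exp (-s * t) * ∫ u in (0 : ℝ)..t, k u) =
      s⁻¹ * ∫ t in Set.Ioi (0 : ℝ), Real.exp (-s * t) * k t := by
  set μ := volume.restrict (Set.Ioi (0 : ℝ)) with hμ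
  let K : ℝ → ℝ → ℝ := fun u t => (Set.Ioi u).indicator (fun t => Real.exp (-s * t)) t * k u
  have hKm : Measurable (Function.uncurry K) := by
    have h1 : Function.uncurry K = fun p : ℝ × ℝ =>
        ({p : ℝ × ℝ | p.1 < p.2}.indicator (fun p => Real.exp (-s * p.2)) p) * k p.1 := by
      funext p
      rcases p with ⟨u, t⟩
      simp [K, Set.indicator, Function.uncurry]
    rw [h1]
    refine Measurable.mul ?_ (hk.comp measurable_fst)
    refine Measurable.indicator (by fun_prop) (measurableSet_lt measurable_fst measurable_snd)
  have hneg : -s < 0 := by linarith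
  have hexpI : ∀ c : ℝ, IntegrableOn (fun t => Real.exp (-s * t)) (Set.Ioi c) := fun c =>
    integrableOn_exp_mul_Ioi hneg c
  have hexp : ∀ u : ℝ, 0 < u →
      ∫ t, (Set.Ioi u).indicator (fun t => Real.exp (-s * t)) t ∂μ = s⁻¹ * Real.exp (-s * u) := by
    intro u hu
    rw [integral_indicator measurableSet_Ioi, hμ, Measure.restrict_restrict measurableSet_Ioi,
      Set.inter_eq_left.2 (Set.Ioi_subset_Ioi hu.le), integral_exp_mul_Ioi hneg]
    field_simp
  have hpos : ∀ᵐ u ∂μ, 0 < u := by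
    filter_upwards [ae_restrict_mem measurableSet_Ioi] with u hu using hu
  have hKi : Integrable (Function.uncurry K) (μ.prod μ) := by
    rw [integrable_prod_iff hKm.aestronglyMeasurable]
    constructor
    · filter_upwards with u
      exact (Integrable.indicator (hexpI 0) (measurableSet_Ioi (a := u))).mul_const (k u)
    · refine (hint.norm.const_mul s⁻¹).congr ?_
      filter_upwards [hpos] with u hu
      have : ∀ t, ‖Function.uncurry K (u, t)‖ =
          (Set.Ioi u).indicator (fun t => Real.exp (-s * t)) t * ‖k u‖ := by
        intro t
        simp only [Function.uncurry, K, norm_mul]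
        congr 1
        exact Real.norm_of_nonneg (Set.indicator_nonneg (fun _ _ => (Real.exp_pos _).le) _)
      simp_rw [this]
      rw [integral_mul_const, hexp u hu, norm_mul, Real.norm_of_nonneg (Real.exp_pos _).le]
      ring
  have hinner : ∀ᵐ t ∂μ, ∫ u, K u t ∂μ = Real.exp (-s * t) * ∫ u in (0 : ℝ)..t, k u := by
    filter_upwards [hpos] with t ht
    have : ∀ u, K u t = (Set.Iio t).indicator (fun u => Real.exp (-s * t) * k u) u := by
      intro u
      by_cases h : u < t <;> simp [K, Set.indicator, h]
    simp_rw [this]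
    rw [integral_indicator measurableSet_Iio, hμ, Measure.restrict_restrict measurableSet_Iio,
      integral_const_mul, intervalIntegral.integral_of_le ht.le, integral_Ioc_eq_integral_Ioo]
    congr 3
    ext x
    simp [and_comm]
  refine ⟨hKi.integral_prod_right.congr hinner, ?_⟩
  rw [← integral_congr_ae hinner, ← integral_integral_swap hKi, ← integral_const_mul]
  refine integral_congr_ae ?_
  filter_upwards [hpos] with u hu
  simp only [K]
  rw [integral_mul_const, hexp u hu]
  ring

theorem inverse_stable_subordinator_density_laplace (β : ℝ) (hβ : β ∈ Set.Ioo (0 : ℝ) 1)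
    (g : ℝ → ℝ → ℝ)
    (hg_meas : Measurable (Function.uncurry g))
    (hg_nonneg : ∀ t τ : ℝ, 0 < t → 0 < τ → 0 ≤ g t τ)
    (hg_lap : ∀ s : ℝ, 0 < s → ∀ τ : ℝ, 0 < τ →
      ∫ t in Set.Ioi (0 : ℝ), Real.exp (-s * t) * g t τ = Real.exp (-τ * s ^ β))
    (G : ℝ → ℝ → ℝ)
    (hG : ∀ t τ : ℝ, G t τ = ∫ u in (0 : ℝ)..t, g u τ)
    (s τ₀ : ℝ) (hs : 0 < s) (hτ₀ : 0 < τ₀)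
    (δ : ℝ) (hδ : 0 < δ) (hδτ₀ : δ < τ₀)
    (F : ℝ → ℝ) (hF_meas : Measurable F) (hF_nonneg : ∀ t : ℝ, 0 ≤ F t)
    (hF_int : IntegrableOn (fun t => Real.exp (-s * t) * F t) (Set.Ioi 0))
    (hdom : ∀ᵐ t ∂(volume.restrict (Set.Ioi (0 : ℝ))),
      ∀ τ ∈ Set.Ioo (τ₀ - δ) (τ₀ + δ),
        DifferentiableAt ℝ (fun τ' => G t τ') τ ∧
          |deriv (fun τ' => G t τ') τ| ≤ F t) :
    ∫ t in Set.Ioi (0 : ℝ), Real.exp (-s * t) * (-(deriv (fun τ' => G t τ') τ₀)) =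
      s ^ (β - 1) * Real.exp (-τ₀ * s ^ β) := by
  have hgm : ∀ τ, Measurable (fun t => g t τ) := fun τ =>
    hg_meas.comp (measurable_id.prodMk measurable_const)
  have key : ∀ τ : ℝ, 0 < τ →
      IntegrableOn (fun t => Real.exp (-s * t) * G t τ) (Set.Ioi 0) ∧
      ∫ t in Set.Ioi (0 : ℝ), Real.exp (-s * t) * G t τ = s⁻¹ * Real.exp (-τ * s ^ β) := by
    intro τ hτ
    have hi : IntegrableOn (fun t => Real.exp (-s * t) * g t τ) (Set.Ioi 0) := by
      by_contra h
      have h1 := hg_lap s hs τ hτ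
      rw [integral_undef h] at h1
      exact (Real.exp_pos _).ne h1
    have h2 := aux_laplace_prim (fun t => g t τ) (hgm τ) s hs hi
    rw [hg_lap s hs τ hτ] at h2
    simpa only [hG] using h2
  have hnhds : Set.Ioo (τ₀ - δ) (τ₀ + δ) ∈ nhds τ₀ := Ioo_mem_nhds (by linarith) (by linarith)
  have hdiff : ∀ᵐ t ∂(volume.restrict (Set.Ioi (0 : ℝ))), ∀ τ ∈ Set.Ioo (τ₀ - δ) (τ₀ + δ),
      HasDerivAt (fun τ' => Real.exp (-s * t) * G t τ')
        (Real.exp (-s * t) * deriv (fun τ' => G t τ') τ) τ := by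
    filter_upwards [hdom] with t ht τ hτ
    exact (ht τ hτ).1.hasDerivAt.const_mul _
  have hlim : Filter.Tendsto (fun n : ℕ => τ₀ + 1 / ((n : ℝ) + 1)) Filter.atTop
      (nhdsWithin τ₀ {τ₀}ᶜ) := by
    refine tendsto_nhdsWithin_iff.2 ⟨?_, ?_⟩
    · simpa using (tendsto_one_div_add_atTop_nhds_zero_nat (𝕜 := ℝ)).const_add τ₀
    · filter_upwards with n
      have : (0 : ℝ) < 1 / ((n : ℝ) + 1) := by positivity
      simp only [Set.mem_compl_iff, Set.mem_singleton_iff]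
      linarith
  have hmeas' : AEStronglyMeasurable
      (fun t => Real.exp (-s * t) * deriv (fun τ' => G t τ') τ₀)
      (volume.restrict (Set.Ioi (0 : ℝ))) := by
    refine aestronglyMeasurable_of_tendsto_ae Filter.atTop
      (f := fun (n : ℕ) t => slope (fun τ' => Real.exp (-s * t) * G t τ') τ₀
        (τ₀ + 1 / ((n : ℝ) + 1))) ?_ ?_
    · intro n
      have hp : 0 < τ₀ + 1 / ((n : ℝ) + 1) := by positivity
      simp only [slope, vsub_eq_sub]
      exact ((key _ hp).1.aestronglyMeasurable.sub (key _ hτ₀).1.aestronglyMeasurable).const_smul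
        ((τ₀ + 1 / ((n : ℝ) + 1) - τ₀)⁻¹ : ℝ)
    · filter_upwards [hdiff] with t ht
      exact (hasDerivAt_iff_tendsto_slope.1 (ht τ₀ (mem_of_mem_nhds hnhds))).comp hlim
  have hmain := (hasDerivAt_integral_of_dominated_loc_of_deriv_le
    (μ := volume.restrict (Set.Ioi (0 : ℝ)))
    (F := fun τ t => Real.exp (-s * t) * G t τ)
    (F' := fun τ t => Real.exp (-s * t) * deriv (fun τ' => G t τ') τ)
    (bound := fun t => Real.exp (-s * t) * F t) hnhds
    (by
      filter_upwards [lt_mem_nhds hτ₀] with τ hτ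
      exact (key τ hτ).1.aestronglyMeasurable)
    (key τ₀ hτ₀).1 hmeas'
    (by
      filter_upwards [hdom] with t ht τ hτ
      rw [norm_mul, Real.norm_of_nonneg (Real.exp_pos _).le]
      exact mul_le_mul_of_nonneg_left (ht τ hτ).2 (Real.exp_pos _).le)
    hF_int hdiff).2
  have hE : HasDerivAt (fun τ : ℝ => s⁻¹ * Real.exp (-τ * s ^ β))
      (s⁻¹ * (Real.exp (-τ₀ * s ^ β) * (-1 * s ^ β))) τ₀ :=
    ((((hasDerivAt_id τ₀).neg).mul_const (s ^ β)).exp).const_mul _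
  have hE' := hE.congr_of_eventuallyEq (f₁ := fun τ => ∫ t in Set.Ioi (0 : ℝ),
      Real.exp (-s * t) * G t τ) (by
    filter_upwards [lt_mem_nhds hτ₀] with τ hτ
    exact (key τ hτ).2)
  have hu := hmain.unique hE'
  simp_rw [mul_neg]
  rw [integral_neg, hu, Real.rpow_sub_one hs.ne']
  ring
end

section
/- Let μ be a nonzero finite Borel measure on (0,1) and define ρ_μ(s) = ∫₀¹ s^β dμ(β) for s > 0. Let g : (0,∞) × (0,∞) → [0,∞) be measurable with ∫₀^∞ e^{−st} g(t,τ) dt = e^{−τ ρ_μ(s)} for all s > 0 and all τ > 0. Define G(t,τ) = ∫₀^t g(u,τ) du. Fix s > 0 and τ₀ > 0, and suppose there exist δ > 0 with δ < τ₀ and a measurable function F : (0,∞) → [0,∞) with ∫₀^∞ e^{−st} F(t) dt < ∞ such that for almost every t > 0 the map τ ↦ G(t,τ) is differentiable on (τ₀ − δ, τ₀ + δ) with |∂_τ G(t,τ)| ≤ F(t) there. Then, writing h(t,τ) = −∂_τ G(t,τ), one has ∫₀^∞ e^{−st} h(t,τ₀) dt = (ρ_μ(s)/s) e^{−τ₀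 ρ_μ(s)}. -/
open MeasureTheory


lemma laplace_primitive_aux (f : ℝ → ℝ) (hf : Measurable f) (s : ℝ) (hs : 0 < s)
    (hint : IntegrableOn (fun t => Real.exp (-s * t) * f t) (Set.Ioi 0)) :
    IntegrableOn (fun t => Real.exp (-s * t) * ∫ u in (0 : ℝ)..t, f u) (Set.Ioi 0) ∧
    ∫ t in Set.Ioi (0 : ℝ), Real.exp (-s * t) * ∫ u in (0 : ℝ)..t, f u =
      (1 / s) * ∫ t in Set.Ioi (0 : ℝ), Real.exp (-s * t) * f t := by
  set ν := (volume.restrict (Set.Ioi (0 : ℝ)) : Measure ℝ) with hν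
  let K : ℝ → ℝ → ℝ := fun t u => if u < t then Real.exp (-s * t) * f u else 0
  have hKm : Measurable (Function.uncurry K) := by
    refine Measurable.ite (measurableSet_lt measurable_snd measurable_fst) ?_ measurable_const
    exact (by fun_prop : Measurable fun p : ℝ × ℝ => Real.exp (-s * p.1)).mul
      (hf.comp measurable_snd)
  have hexp : ∀ u : ℝ, ∫ t in Set.Ioi u, Real.exp (-s * t) = Real.exp (-s * u) / s := by
    intro u
    rw [integral_exp_mul_Ioi (by linarith) u]
    field_simp
  have hKu : ∀ u, (fun t => K t u) =
      (Set.Ioi u).indicator (fun t => Real.exp (-s * t) * f u) := by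
    intro u; ext t; simp [K, Set.indicator_apply]
  have hKn : ∀ u, (fun t => ‖K t u‖) =
      (Set.Ioi u).indicator (fun t => Real.exp (-s * t) * ‖f u‖) := by
    intro u; ext t
    by_cases h : u < t <;> simp [K, Set.indicator_apply, h]
  have hset : ∀ u, 0 < u → Set.Ioi u ∩ Set.Ioi (0:ℝ) = Set.Ioi u := by
    intro u hu
    exact Set.inter_eq_left.2 (Set.Ioi_subset_Ioi hu.le)
  have hgen : ∀ u, 0 < u → ∀ c : ℝ,
      ∫ t, (Set.Ioi u).indicator (fun t => Real.exp (-s * t) * c) t ∂ν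
        = (1 / s) * (Real.exp (-s * u) * c) := by
    intro u hu c
    rw [integral_indicator measurableSet_Ioi, hν, Measure.restrict_restrict measurableSet_Ioi,
      hset u hu, integral_mul_const, hexp]
    ring
  have hprod : Integrable (Function.uncurry K) (ν.prod ν) := by
    rw [integrable_prod_iff' hKm.aestronglyMeasurable]
    constructor
    · refine (ae_restrict_mem measurableSet_Ioi).mono fun u hu => ?_
      change Integrable (fun t => K t u) ν
      rw [hKu u, integrable_indicator_iff measurableSet_Ioi, IntegrableOn, hν,
        Measure.restrict_restrict measurableSet_Ioi, hset u hu]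
      exact (integrableOn_exp_mul_Ioi (by linarith) u).mul_const _
    · refine ((hint.norm).const_mul (1 / s)).congr ?_
      refine (ae_restrict_mem measurableSet_Ioi).mono fun u hu => ?_
      change _ = ∫ t, ‖K t u‖ ∂ν
      rw [hKn u, hgen u hu]
      simp
  have hKt : ∀ t, 0 < t → ∫ u, K t u ∂ν = Real.exp (-s * t) * ∫ u in (0 : ℝ)..t, f u := by
    intro t ht
    have : (fun u => K t u) = (Set.Iio t).indicator (fun u => Real.exp (-s * t) * f u) := by
      ext u; simp [K, Set.indicator_apply]
    rw [this, integral_indicator measurableSet_Iio, hν,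
      Measure.restrict_restrict measurableSet_Iio, integral_const_mul,
      intervalIntegral.integral_of_le ht.le, integral_Ioc_eq_integral_Ioo,
      Set.inter_comm, Set.Ioi_inter_Iio]
  have hae : (fun t => ∫ u, K t u ∂ν) =ᵐ[ν]
      fun t => Real.exp (-s * t) * ∫ u in (0 : ℝ)..t, f u :=
    (ae_restrict_mem measurableSet_Ioi).mono fun t ht => hKt t ht
  refine ⟨hprod.integral_prod_left.congr hae, ?_⟩
  rw [← integral_congr_ae hae, integral_integral_swap hprod, ← integral_const_mul]
  refine integral_congr_ae ((ae_restrict_mem measurableSet_Ioi).mono fun u hu => ?_)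
  change ∫ t, K t u ∂ν = _
  rw [hKu u, hgen u hu]

/- STATEMENT 6 (identity (8)): the Laplace transform in t of the density
h(t,τ) = -∂_τ ∫₀^t g(u,τ) du of the inverse of a mixed stable subordinator equals
(ρ_μ(s)/s) e^(-τ ρ_μ(s)). -/
theorem inverse_mixed_subordinator_density_laplace (μ : Measure ℝ) [IsFiniteMeasure μ]
    (hμ_ne : μ ≠ 0) (hμ_supp : μ (Set.Ioo (0 : ℝ) 1)ᶜ = 0)
    (ρ : ℝ → ℝ) (hρ : ∀ s : ℝ, 0 < s → ρ s = ∫ b, s ^ b ∂μ)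
    (g : ℝ → ℝ → ℝ)
    (hg_meas : Measurable (Function.uncurry g))
    (hg_nonneg : ∀ t τ : ℝ, 0 < t → 0 < τ → 0 ≤ g t τ)
    (hg_lap : ∀ s : ℝ, 0 < s → ∀ τ : ℝ, 0 < τ →
      ∫ t in Set.Ioi (0 : ℝ), Real.exp (-s * t) * g t τ = Real.exp (-τ * ρ s))
    (G : ℝ → ℝ → ℝ)
    (hG : ∀ t τ : ℝ, G t τ = ∫ u in (0 : ℝ)..t, g u τ)
    (s τ₀ : ℝ) (hs : 0 < s) (hτ₀ : 0 < τ₀)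
    (δ : ℝ) (hδ : 0 < δ) (hδτ₀ : δ < τ₀)
    (F : ℝ → ℝ) (hF_meas : Measurable F) (hF_nonneg : ∀ t : ℝ, 0 ≤ F t)
    (hF_int : IntegrableOn (fun t => Real.exp (-s * t) * F t) (Set.Ioi 0))
    (hdom : ∀ᵐ t ∂(volume.restrict (Set.Ioi (0 : ℝ))),
      ∀ τ ∈ Set.Ioo (τ₀ - δ) (τ₀ + δ),
        DifferentiableAt ℝ (fun τ' => G t τ') τ ∧
          |deriv (fun τ' => G t τ') τ| ≤ F t) :
    ∫ t in Set.Ioi (0 : ℝ), Real.exp (-s * t) * (-(deriv (fun τ' => G t τ') τ₀)) =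
      (ρ s / s) * Real.exp (-τ₀ * ρ s) := by
  have hgint : ∀ τ, 0 < τ →
      IntegrableOn (fun t => Real.exp (-s * t) * g t τ) (Set.Ioi 0) := by
    intro τ hτ
    by_contra h
    have h1 := hg_lap s hs τ hτ
    rw [integral_undef h] at h1
    exact (Real.exp_pos _).ne h1
  have haux := fun τ (hτ : 0 < τ) =>
    laplace_primitive_aux (fun t => g t τ) (hg_meas.comp (measurable_id.prodMk measurable_const))
      s hs (hgint τ hτ)
  have hGint : ∀ τ, 0 < τ →
      IntegrableOn (fun t => Real.exp (-s * t) * G t τ) (Set.Ioi 0) := by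
    intro τ hτ
    simp only [hG]
    exact (haux τ hτ).1
  have hGval : ∀ τ, 0 < τ → ∫ t in Set.Ioi (0 : ℝ), Real.exp (-s * t) * G t τ =
      (1 / s) * Real.exp (-τ * ρ s) := by
    intro τ hτ
    simp only [hG]
    rw [(haux τ hτ).2, hg_lap s hs τ hτ]
  have hpos : ∀ τ ∈ Set.Ioo (τ₀ - δ) (τ₀ + δ), 0 < τ := fun τ h => by
    have := h.1
    linarith
  have hnhds : Set.Ioo (τ₀ - δ) (τ₀ + δ) ∈ nhds τ₀ :=
    Ioo_mem_nhds (by linarith) (by linarith)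
  have hmem : τ₀ ∈ Set.Ioo (τ₀ - δ) (τ₀ + δ) := ⟨by linarith, by linarith⟩
  have hdiff : ∀ᵐ t ∂(volume.restrict (Set.Ioi (0 : ℝ))), ∀ τ ∈ Set.Ioo (τ₀ - δ) (τ₀ + δ),
      HasDerivAt (fun τ' => Real.exp (-s * t) * G t τ')
        (Real.exp (-s * t) * deriv (fun τ' => G t τ') τ) τ := by
    filter_upwards [hdom] with t ht τ hτ
    exact (ht τ hτ).1.hasDerivAt.const_mul _
  have hmeas' : AEStronglyMeasurable
      (fun t => Real.exp (-s * t) * deriv (fun τ' => G t τ') τ₀)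
      (volume.restrict (Set.Ioi (0 : ℝ))) := by
    obtain ⟨x, -, hx, hxlim⟩ := exists_seq_strictAnti_tendsto' (show τ₀ < τ₀ + δ by linarith)
    refine aestronglyMeasurable_of_tendsto_ae (u := Filter.atTop)
      (f := fun n t => slope (fun τ' => Real.exp (-s * t) * G t τ') τ₀ (x n)) ?_ ?_
    · intro n
      simp only [slope_def_field]
      have hn : 0 < x n := by have := (hx n).1; linarith
      exact ((hGint _ hn).sub (hGint _ hτ₀)).div_const _ |>.aestronglyMeasurable
    · filter_upwards [hdiff] with t ht
      refine (hasDerivAt_iff_tendsto_slope.1 (ht τ₀ hmem)).comp ?_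
      exact tendsto_nhdsWithin_iff.2 ⟨hxlim, Filter.Eventually.of_forall fun n => (hx n).1.ne'⟩
  have key := (hasDerivAt_integral_of_dominated_loc_of_deriv_le
    (F := fun τ t => Real.exp (-s * t) * G t τ)
    (F' := fun τ t => Real.exp (-s * t) * deriv (fun τ' => G t τ') τ)
    (bound := fun t => Real.exp (-s * t) * F t) hnhds
    (by filter_upwards [hnhds] with τ hτ using (hGint τ (hpos τ hτ)).aestronglyMeasurable)
    (hGint τ₀ hτ₀) hmeas'
    (by
      filter_upwards [hdom] with t ht τ hτ
      rw [norm_mul, Real.norm_eq_abs, Real.norm_eq_abs, abs_of_pos (Real.exp_pos _)]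
      exact mul_le_mul_of_nonneg_left (ht τ hτ).2 (Real.exp_pos _).le)
    hF_int hdiff).2
  have hd2 : HasDerivAt (fun τ => (1 / s) * Real.exp (-τ * ρ s))
      ((1 / s) * (Real.exp (-τ₀ * ρ s) * (-1 * ρ s))) τ₀ :=
    ((((hasDerivAt_id τ₀).neg).mul_const (ρ s)).exp).const_mul (1 / s)
  have heq : (fun τ => ∫ t in Set.Ioi (0 : ℝ), Real.exp (-s * t) * G t τ) =ᶠ[nhds τ₀]
      fun τ => (1 / s) * Real.exp (-τ * ρ s) := by
    filter_upwards [hnhds] with τ hτ using hGval τ (hpos τ hτ)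
  have hfin := key.unique (hd2.congr_of_eventuallyEq heq)
  simp only [mul_neg]
  rw [integral_neg, hfin]
  ring
end

section
/- Let α > 0 and σ > 0, and define R(t) = (σ²/(2α)) (1 − e^{−2αt}) for t > 0 and p : (0,∞) × ℝ → ℝ by p(t,x) = (2π R(t))^{-1/2} · exp( − x² / (2 R(t)) ). Then for every t > 0 and x ∈ ℝ, ∂_t p(t,x) = α ∂_x ( x · p(t,x) ) + (σ²/2) ∂²_x p(t,x). -/
/- STATEMENT 14 (Example 5, equation (46)): classical FPK equation for the centered
Ornstein-Uhlenbeck process, with variance function R(t) = (σ²/(2α))(1 - e^(-2αt)). -/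
theorem fpk_ou_classical_form (α σ : ℝ) (hα : 0 < α) (hσ : 0 < σ)
    (R : ℝ → ℝ)
    (hR : ∀ t : ℝ, 0 < t → R t = σ ^ 2 / (2 * α) * (1 - Real.exp (-(2 * α * t))))
    (p : ℝ → ℝ → ℝ)
    (hp : ∀ t : ℝ, 0 < t → ∀ x : ℝ,
      p t x = (2 * Real.pi * R t) ^ (-(1 / 2) : ℝ) *
        Real.exp (-x ^ 2 / (2 * R t)))
    (t : ℝ) (ht : 0 < t) (x : ℝ) :
    deriv (fun s => p s x) t =
      α * deriv (fun y => y * p t y) x +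
        σ ^ 2 / 2 * iteratedDeriv 2 (fun y => p t y) x := by
  have hE : Real.exp (-(2 * α * t)) < 1 := by
    rw [Real.exp_lt_one_iff]
    have : 0 < 2 * α * t := by positivity
    linarith
  have hr : 0 < R t := by
    rw [hR t ht]
    have : 0 < 1 - Real.exp (-(2 * α * t)) := by linarith
    positivity
  have hpi := Real.pi_pos
  -- derivative of the variance function
  have hRd : HasDerivAt R (σ ^ 2 - 2 * α * R t) t := by
    have h1 : HasDerivAt (fun s : ℝ => -(2 * α * s)) (-(2 * α)) t := by
      have h0 := ((hasDerivAt_id t).const_mul (2 * α)).neg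
      rw [mul_one] at h0
      exact h0
    have h2 := (h1.exp.const_sub 1).const_mul (σ ^ 2 / (2 * α))
    have h3 : HasDerivAt R _ t := h2.congr_of_eventuallyEq (by
      filter_upwards [lt_mem_nhds ht] with s hs
      exact hR s hs)
    convert h3 using 1
    rw [hR t ht]
    field_simp
    ring
  -- time derivative
  have htd : HasDerivAt (fun s => p s x)
      (p t x * ((σ ^ 2 - 2 * α * R t) * (x ^ 2 / (2 * R t ^ 2) - 1 / (2 * R t)))) t := by
    have h1 := (hRd.const_mul (2 * Real.pi)).rpow_const (p := (-(1 / 2) : ℝ))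
      (Or.inl (by positivity))
    have h2 := ((hasDerivAt_const t (-x ^ 2)).div (hRd.const_mul 2) (by positivity)).exp
    have h3 : HasDerivAt (fun s => p s x) _ t := (h1.mul h2).congr_of_eventuallyEq (by
      filter_upwards [lt_mem_nhds ht] with s hs
      exact hp s hs x)
    convert h3 using 1
    rw [hp t ht x, Real.rpow_sub_one (by positivity)]
    simp only [Pi.div_apply]
    field_simp
    ring
  -- space derivatives
  have hxd : ∀ y, HasDerivAt (fun y => p t y) (p t y * (-y / R t)) y := by
    intro y
    have h1 := ((((hasDerivAt_id y).pow 2).neg.div_const (2 * R t)).exp).const_mul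
      ((2 * Real.pi * R t) ^ (-(1 / 2) : ℝ))
    have h3 : HasDerivAt (fun y => p t y) _ y := h1.congr_of_eventuallyEq
      (Filter.Eventually.of_forall fun z => by simpa using hp t ht z)
    convert h3 using 1
    rw [hp t ht y]
    simp
    field_simp
  have hd1 : deriv (fun y => p t y) = fun y => p t y * (-y / R t) :=
    funext fun y => (hxd y).deriv
  have hd2 := (hxd x).mul ((hasDerivAt_id x).neg.div_const (R t))
  have hd3 := (hasDerivAt_id x).mul (hxd x)
  have e2 : iteratedDeriv 2 (fun y => p t y) x =
      p t x * (-x / R t) * (-x / R t) + p t x * (-1 / R t) := by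
    rw [iteratedDeriv_succ, iteratedDeriv_one, hd1]
    exact hd2.deriv
  have e3 : deriv (fun y => y * p t y) x = 1 * p t x + x * (p t x * (-x / R t)) :=
    hd3.deriv
  rw [htd.deriv, e2, e3]
  field_simp
  ring
end
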